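/- Let F be a Banach space with cotype q (2 ≤ q < ∞) and let E_1, …, E_s be 𝓛_∞-spaces (1 ≤ s ≤ n). Then, regardless of the Banach spaces E_{s+1}, …, E_n, every continuous n-linear map from E_1 × ⋯ × E_n into F is absolutely (q; q_1, …, q_n)-summing, where q_1 = ⋯ = q_s = 2 and q_{s+1} = ⋯ = q_n = 1. -/

import Mathlib

open MeasureTheory

/-- Weak `ℓ_q` norm of a finite family in a normed space. -/
noncomputable def weakLpNorm (𝕜 : Type*) [RCLike 𝕜] {E : Type*} [NormedAddCommGroup E]
    [NormedSpace 𝕜 E] (q : ℝ) {m : ℕ} (x : Fin m → E) : ℝ :=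
  ⨆ φ : {φ : E →L[𝕜] 𝕜 // ‖φ‖ ≤ 1}, (∑ j, ‖φ.1 (x j)‖ ^ q) ^ (1 / q)

/-- `T` satisfies the `p`-semi-integral inequality with constant `C`, witnessed by a regular
Borel probability measure on the product of the closed dual unit balls with their
weak-star topologies. -/
def SemiIntegralWith (𝕜 : Type*) [RCLike 𝕜] {ι : Type*} [Fintype ι] {E : ι → Type*}
    [∀ i, NormedAddCommGroup (E i)] [∀ i, NormedSpace 𝕜 (E i)]
    {F : Type*} [NormedAddCommGroup F]
    (p C : ℝ) (T : (∀ i, E i) → F) : Prop :=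
  letI : MeasurableSpace (∀ i, {φ : WeakDual 𝕜 (E i) // ∀ z, ‖φ z‖ ≤ ‖z‖}) := borel _
  ∃ μ : Measure (∀ i, {φ : WeakDual 𝕜 (E i) // ∀ z, ‖φ z‖ ≤ ‖z‖}),
    IsProbabilityMeasure μ ∧ μ.Regular ∧
      ∀ x : ∀ i, E i,
        ‖T x‖ ≤ C * (∫ φ, ∏ i, ‖(φ i).1 (x i)‖ ^ p ∂μ) ^ (1 / p)

/-- The `si,p` norm: infimum of admissible constants. -/
noncomputable def siNorm (𝕜 : Type*) [RCLike 𝕜] {ι : Type*} [Fintype ι] {E : ι → Type*}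
    [∀ i, NormedAddCommGroup (E i)] [∀ i, NormedSpace 𝕜 (E i)]
    {F : Type*} [NormedAddCommGroup F]
    (p : ℝ) (T : (∀ i, E i) → F) : ℝ :=
  sInf {C : ℝ | 0 ≤ C ∧ SemiIntegralWith 𝕜 p C T}

/-- `T` is absolutely `(p; q₁,…,qₙ)`-summing with constant `C`. -/
def AbsSummingWith (𝕜 : Type*) [RCLike 𝕜] {ι : Type*} [Fintype ι] {E : ι → Type*}
    [∀ i, NormedAddCommGroup (E i)] [∀ i, NormedSpace 𝕜 (E i)]
    {F : Type*} [NormedAddCommGroup F]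
    (p : ℝ) (q : ι → ℝ) (C : ℝ) (T : (∀ i, E i) → F) : Prop :=
  ∀ (m : ℕ) (x : ∀ i, Fin m → E i),
    (∑ j, ‖T (fun i => x i j)‖ ^ p) ^ (1 / p) ≤ C * ∏ i, weakLpNorm 𝕜 (q i) (x i)

/-- `T` is `p`-dominated with constant `C`, witnessed by regular Borel probability measures
on the closed dual unit balls with their weak-star topologies. -/
def DominatedWith (𝕜 : Type*) [RCLike 𝕜] {ι : Type*} [Fintype ι] {E : ι → Type*}
    [∀ i, NormedAddCommGroup (E i)] [∀ i, NormedSpace 𝕜 (E i)]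
    {F : Type*} [NormedAddCommGroup F]
    (p C : ℝ) (T : (∀ i, E i) → F) : Prop :=
  letI : ∀ i, MeasurableSpace {φ : WeakDual 𝕜 (E i) // ∀ z, ‖φ z‖ ≤ ‖z‖} := fun i => borel _
  ∃ μ : ∀ i, Measure {φ : WeakDual 𝕜 (E i) // ∀ z, ‖φ z‖ ≤ ‖z‖},
    (∀ i, IsProbabilityMeasure (μ i)) ∧ (∀ i, (μ i).Regular) ∧
      ∀ x : ∀ i, E i,
        ‖T x‖ ≤ C * ∏ i, (∫ φ, ‖φ.1 (x i)‖ ^ p ∂(μ i)) ^ (1 / p)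

/-- `E` is an `𝓛_∞`-space. -/
def IsLinftySpace (𝕜 : Type*) [RCLike 𝕜] (E : Type*) [NormedAddCommGroup E]
    [NormedSpace 𝕜 E] : Prop :=
  ∃ lam : ℝ, 1 ≤ lam ∧ ∀ M : Submodule 𝕜 E, FiniteDimensional 𝕜 M →
    ∃ N : Submodule 𝕜 E, M ≤ N ∧ FiniteDimensional 𝕜 N ∧
      ∃ v : N ≃L[𝕜] (Fin (Module.finrank 𝕜 N) → 𝕜),
        ‖(v : N →L[𝕜] (Fin (Module.finrank 𝕜 N) → 𝕜))‖ *
          ‖(v.symm : (Fin (Module.finrank 𝕜 N) → 𝕜) →L[𝕜] N)‖ ≤ lam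

/-- `F` has cotype `q`. -/
def HasCotype (q : ℝ) (F : Type*) [NormedAddCommGroup F] : Prop :=
  ∃ C : ℝ, 0 ≤ C ∧ ∀ (m : ℕ) (x : Fin m → F),
    (∑ j, ‖x j‖ ^ q) ^ (1 / q) ≤
      C * ((∑ ε : Fin m → Bool, ‖∑ j, (if ε j then x j else -x j)‖ ^ (2 : ℝ)) / 2 ^ m)
        ^ ((1 : ℝ) / 2)

universe u v

/-!
Freezing one family `x` in the first variable of `T` gives a multilinear map in the other variables
with values in `ℓ_q(F)`. Cotype `q`, written with `q`-th powers and averaged signed sums, passes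
from `F` to `ℓ_q(F)` with the same constant, so induction on the number of variables reduces the
theorem to linear operators. For these, cotype directly gives `(q, 1)`-summability. On a space of
functions with the supremum norm, Pisier's argument turns this into an almost-domination of
`‖u y‖ ^ q` by a linear functional of `|y|`. Given `(a_j)` with `∑ |a_j| ^ 2 ≤ 1` pointwise, cut the
values of the signed sums `∑ ± a_j` into layers `k ≤ |·| ≤ k + 1`: by the subgaussian estimate the
total size of the `k`-th layers decays like `exp (-k)`, so the domination bounds the layers by a
geometric series, and cotype once more gives `(q, 2)`-summability with a constant independent of
the dimension. Local factorization through `ℓ_∞^d` carries this over to `𝓛_∞`-spaces.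
-/

section WeakNorm

variable {𝕜 E : Type*} [RCLike 𝕜] [NormedAddCommGroup E] [NormedSpace 𝕜 E] {p : ℝ} {m : ℕ}

lemma weakLpNorm_nonneg (x : Fin m → E) : 0 ≤ weakLpNorm 𝕜 p x :=
  Real.iSup_nonneg fun _ => by positivity

lemma bddAbove_range_weakLpNorm (hp : 0 ≤ p) (x : Fin m → E) :
    BddAbove (Set.range fun φ : {φ : E →L[𝕜] 𝕜 // ‖φ‖ ≤ 1} =>
      (∑ j, ‖φ.1 (x j)‖ ^ p) ^ (1 / p)) := by
  refine ⟨(∑ j, ‖x j‖ ^ p) ^ (1 / p), ?_⟩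
  rintro _ ⟨φ, rfl⟩
  dsimp only
  gcongr with j
  exact φ.1.le_of_opNorm_le_of_le φ.2 le_rfl |>.trans_eq (one_mul _)

lemma lpNorm_apply_le_weakLpNorm (hp : 0 < p) (x : Fin m → E) (φ : E →L[𝕜] 𝕜) :
    (∑ j, ‖φ (x j)‖ ^ p) ^ (1 / p) ≤ ‖φ‖ * weakLpNorm 𝕜 p x := by
  rcases eq_or_ne φ 0 with rfl | hφ
  · simp [Real.zero_rpow hp.ne', Real.zero_rpow (inv_ne_zero hp.ne')]
  have hφ' : 0 < ‖φ‖ := norm_pos_iff.2 hφ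
  have hunit : ‖((‖φ‖⁻¹ : ℝ) : 𝕜) • φ‖ ≤ 1 := by
    rw [norm_smul, RCLike.norm_ofReal, abs_of_pos (inv_pos.2 hφ'), inv_mul_cancel₀ hφ'.ne']
  have hle := le_ciSup (bddAbove_range_weakLpNorm hp.le x) ⟨_, hunit⟩
  have hscale : ∑ j, ‖(((‖φ‖⁻¹ : ℝ) : 𝕜) • φ) (x j)‖ ^ p = ‖φ‖⁻¹ ^ p * ∑ j, ‖φ (x j)‖ ^ p := by
    rw [Finset.mul_sum]
    refine Finset.sum_congr rfl fun j _ => ?_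
    rw [_root_.smul_apply, norm_smul, RCLike.norm_ofReal, abs_of_pos (inv_pos.2 hφ'),
      Real.mul_rpow (inv_nonneg.2 hφ'.le) (norm_nonneg _)]
  rw [hscale, Real.mul_rpow (by positivity) (by positivity), ← Real.rpow_mul (by positivity),
    mul_one_div_cancel hp.ne', Real.rpow_one, inv_mul_le_iff₀ hφ'] at hle
  exact hle

lemma lpNorm_apply_le_weakLpNorm_coe (hp : 0 < p) {N : Submodule 𝕜 E} (x : Fin m → N)
    (φ : N →L[𝕜] 𝕜) :
    (∑ j, ‖φ (x j)‖ ^ p) ^ (1 / p) ≤ ‖φ‖ * weakLpNorm 𝕜 p (fun j => (x j : E)) := by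
  obtain ⟨Φ, hΦ, hnorm⟩ := exists_extension_norm_eq N φ
  simpa only [hΦ, hnorm] using lpNorm_apply_le_weakLpNorm hp (fun j => (x j : E)) Φ

end WeakNorm

section SignedSum

/-- The value `∑ ± x_j` at the sign pattern `ε` of the Rademacher sum of a finite family, the
sign being `+` where `ε` is `true`. Averaging over all `ε` replaces the integral over the
Rademacher functions. -/
def signedSum {ι F : Type*} [Fintype ι] [AddCommGroup F] (ε : ι → Bool) (x : ι → F) : F :=
  ∑ j, if ε j then x j else -x j

variable {ι : Type*} [Fintype ι]

lemma map_signedSum {F G H : Type*} [AddCommGroup F] [AddCommGroup G] [FunLike H F G]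
    [AddMonoidHomClass H F G] (f : H) (ε : ι → Bool) (x : ι → F) :
    f (signedSum ε x) = signedSum ε fun j => f (x j) := by
  simp only [signedSum, map_sum, apply_ite f, map_neg]

lemma signedSum_apply {κ : Type*} {F : κ → Type*} [∀ t, AddCommGroup (F t)] (ε : ι → Bool)
    (x : ι → ∀ t, F t) (t : κ) : signedSum ε x t = signedSum ε fun j => x j t :=
  map_signedSum (Pi.evalAddMonoidHom F t) ε x

lemma norm_signedSum_le {F : Type*} [NormedAddCommGroup F] (ε : ι → Bool) (x : ι → F) :
    ‖signedSum ε x‖ ≤ ∑ j, ‖x j‖ := by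
  refine norm_sum_le_of_le _ fun j _ => ?_
  split_ifs <;> simp

lemma norm_signedSum_le_weakLpNorm_one {𝕜 E : Type*} [RCLike 𝕜] [NormedAddCommGroup E]
    [NormedSpace 𝕜 E] {m : ℕ} (ε : Fin m → Bool) (x : Fin m → E) :
    ‖signedSum ε x‖ ≤ weakLpNorm 𝕜 1 x := by
  obtain ⟨φ, hφ, hnorming⟩ := exists_dual_vector'' 𝕜 (signedSum ε x)
  calc ‖signedSum ε x‖ = ‖φ (signedSum ε x)‖ := by simp [hnorming]
    _ ≤ ∑ j, ‖φ (x j)‖ := by rw [map_signedSum]; exact norm_signedSum_le ..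
    _ ≤ ‖φ‖ * weakLpNorm 𝕜 1 x := by simpa using lpNorm_apply_le_weakLpNorm one_pos x φ
    _ ≤ weakLpNorm 𝕜 1 x := mul_le_of_le_one_left (weakLpNorm_nonneg x) hφ

variable [DecidableEq ι]

lemma sum_exp_signedSum_le (a : ι → ℝ) :
    ∑ ε, Real.exp (signedSum ε a) ≤ 2 ^ Fintype.card ι * Real.exp ((∑ j, a j ^ 2) / 2) := by
  calc ∑ ε, Real.exp (signedSum ε a)
      = ∏ j, ∑ b : Bool, Real.exp (if b then a j else -a j) := by
        simp only [signedSum, Real.exp_sum, Finset.prod_univ_sum, Fintype.piFinset_univ]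
    _ = ∏ j, 2 * Real.cosh (a j) := by
        refine Finset.prod_congr rfl fun j _ => ?_
        simp [Real.cosh_eq, mul_div_cancel₀]
    _ ≤ ∏ j, 2 * Real.exp (a j ^ 2 / 2) :=
        Finset.prod_le_prod (fun j _ => (mul_pos two_pos (Real.cosh_pos _)).le) fun j _ =>
          mul_le_mul_of_nonneg_left (Real.cosh_le_exp_half_sq _) zero_le_two
    _ = 2 ^ Fintype.card ι * Real.exp ((∑ j, a j ^ 2) / 2) := by
        simp [Finset.prod_mul_distrib, Real.exp_sum, Finset.sum_div]

lemma sum_exp_abs_signedSum_le (a : ι → ℝ) :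
    ∑ ε, Real.exp |signedSum ε a| ≤
      2 ^ Fintype.card ι * (2 * Real.exp ((∑ j, a j ^ 2) / 2)) := by
  have hneg (ε : ι → Bool) : -signedSum ε a = signedSum ε fun j => -a j :=
    map_signedSum (-AddMonoidHom.id ℝ) ε a
  calc ∑ ε, Real.exp |signedSum ε a|
      ≤ ∑ ε, (Real.exp (signedSum ε a) + Real.exp (-signedSum ε a)) :=
        Finset.sum_le_sum fun ε _ => Real.exp_abs_le _
    _ = ∑ ε, Real.exp (signedSum ε a) + ∑ ε, Real.exp (signedSum ε fun j => -a j) := by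
        simp only [Finset.sum_add_distrib, hneg]
    _ ≤ 2 ^ Fintype.card ι * (2 * Real.exp ((∑ j, a j ^ 2) / 2)) := by
        have hpos := sum_exp_signedSum_le a
        have hneg := sum_exp_signedSum_le fun j => -a j
        simp only [neg_sq] at hneg
        linarith

lemma norm_le_abs_re_add_abs_im {𝕜 : Type*} [RCLike 𝕜] (z : 𝕜) :
    ‖z‖ ≤ |RCLike.re z| + |RCLike.im z| := by
  refine le_of_sq_le_sq ?_ (by positivity)
  rw [RCLike.norm_sq_eq_def, add_sq, sq_abs, sq_abs]
  nlinarith [mul_nonneg (abs_nonneg (RCLike.re z)) (abs_nonneg (RCLike.im z))]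

lemma exp_norm_le_average_exp {𝕜 : Type*} [RCLike 𝕜] (z : 𝕜) :
    Real.exp ‖z‖ ≤ (Real.exp |2 * RCLike.re z| + Real.exp |2 * RCLike.im z|) / 2 := by
  have hdouble (r : ℝ) : Real.exp |2 * r| = Real.exp |r| ^ 2 := by
    rw [abs_mul, abs_two, two_mul, Real.exp_add, sq]
  have hexp : Real.exp ‖z‖ ≤ Real.exp |RCLike.re z| * Real.exp |RCLike.im z| := by
    rw [← Real.exp_add]
    exact Real.exp_le_exp.2 (norm_le_abs_re_add_abs_im z)
  rw [hdouble, hdouble]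
  linarith [two_mul_le_add_sq (Real.exp |RCLike.re z|) (Real.exp |RCLike.im z|)]

lemma sum_exp_norm_signedSum_le {𝕜 : Type*} [RCLike 𝕜] (a : ι → 𝕜) :
    ∑ ε, Real.exp ‖signedSum ε a‖ ≤
      2 ^ Fintype.card ι * (2 * Real.exp (2 * ∑ j, ‖a j‖ ^ 2)) := by
  have hbound (f : 𝕜 →+ ℝ) (hf : ∀ z, |f z| ≤ ‖z‖) :
      ∑ ε, Real.exp |2 * f (signedSum ε a)| ≤
        2 ^ Fintype.card ι * (2 * Real.exp (2 * ∑ j, ‖a j‖ ^ 2)) := by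
    have hmap (ε : ι → Bool) : 2 * f (signedSum ε a) = signedSum ε fun j => 2 * f (a j) :=
      map_signedSum ((AddMonoidHom.mulLeft 2).comp f) ε a
    simp only [hmap]
    refine (sum_exp_abs_signedSum_le _).trans ?_
    gcongr
    rw [Finset.sum_div, Finset.mul_sum]
    refine Finset.sum_le_sum fun j _ => ?_
    have := sq_le_sq' (neg_le_of_abs_le (hf (a j))) (le_of_abs_le (hf (a j)))
    linarith
  calc ∑ ε, Real.exp ‖signedSum ε a‖
      ≤ ∑ ε, (Real.exp |2 * RCLike.re (signedSum ε a)| +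
          Real.exp |2 * RCLike.im (signedSum ε a)|) / 2 :=
        Finset.sum_le_sum fun ε _ => exp_norm_le_average_exp _
    _ ≤ 2 ^ Fintype.card ι * (2 * Real.exp (2 * ∑ j, ‖a j‖ ^ 2)) := by
        rw [← Finset.sum_div, Finset.sum_add_distrib]
        linarith [hbound RCLike.re RCLike.abs_re_le_norm, hbound RCLike.im RCLike.abs_im_le_norm]

end SignedSum

section AverageCotype

/-- Cotype `q` in the form `∑ ‖x_j‖ ^ q ≤ A · average of ‖∑ ± x_j‖ ^ q`. Compared with
`HasCotype`, the average has exponent `q` instead of `2` and the constant `A` is not raised to a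
power, so that the property passes to `ℓ_q`-sums with the same constant. -/
def HasAverageCotype (q A : ℝ) (F : Type*) [NormedAddCommGroup F] : Prop :=
  ∀ (m : ℕ) (x : Fin m → F),
    ∑ j, ‖x j‖ ^ q ≤ A * ((∑ ε : Fin m → Bool, ‖signedSum ε x‖ ^ q) / 2 ^ m)

variable {q A : ℝ} {F : Type*} [NormedAddCommGroup F]

lemma HasCotype.exists_hasAverageCotype (hF : HasCotype q F) (hq : 2 ≤ q) :
    ∃ A, 0 ≤ A ∧ HasAverageCotype q A F := by
  obtain ⟨C, hC, hcotype⟩ := hF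
  have hq0 : 0 < q := by linarith
  refine ⟨C ^ q, by positivity, fun m x => ?_⟩
  have hjensen : ((∑ ε : Fin m → Bool, ‖signedSum ε x‖ ^ (2 : ℝ)) / 2 ^ m) ^ (1 / 2 * q) ≤
      (∑ ε : Fin m → Bool, ‖signedSum ε x‖ ^ q) / 2 ^ m := by
    have h := Real.rpow_arith_mean_le_arith_mean_rpow Finset.univ
      (fun _ : Fin m → Bool => ((2 : ℝ) ^ m)⁻¹) (fun ε => ‖signedSum ε x‖ ^ (2 : ℝ))
      (fun _ _ => by positivity) (by simp) (fun _ _ => by positivity) (p := 1 / 2 * q)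
      (by linarith)
    simpa only [Finset.sum_div, ← div_eq_inv_mul, ← Real.rpow_mul (norm_nonneg _),
      ← mul_assoc, mul_one_div_cancel (two_ne_zero' ℝ), one_mul] using h
  calc ∑ j, ‖x j‖ ^ q = ((∑ j, ‖x j‖ ^ q) ^ (1 / q)) ^ q := by
        rw [one_div, Real.rpow_inv_rpow (by positivity) hq0.ne']
    _ ≤ (C * ((∑ ε : Fin m → Bool, ‖signedSum ε x‖ ^ (2 : ℝ)) / 2 ^ m) ^ ((1 : ℝ) / 2)) ^ q := by
        gcongr
        exact hcotype m x
    _ = C ^ q * ((∑ ε : Fin m → Bool, ‖signedSum ε x‖ ^ (2 : ℝ)) / 2 ^ m) ^ (1 / 2 * q) := by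
        rw [Real.mul_rpow hC (by positivity), ← Real.rpow_mul (by positivity)]
    _ ≤ _ := by gcongr

lemma HasAverageCotype.sum_norm_map_rpow_le {𝕜 E : Type*} [RCLike 𝕜] [NormedAddCommGroup E]
    [NormedSpace 𝕜 E] [NormedSpace 𝕜 F] (hF : HasAverageCotype q A F) (hA : 0 ≤ A) (hq : 0 ≤ q)
    (u : E →L[𝕜] F) {m : ℕ} {x : Fin m → E} {R : ℝ} (hx : ∀ ε, ‖signedSum ε x‖ ≤ R) :
    ∑ j, ‖u (x j)‖ ^ q ≤ A * (‖u‖ * R) ^ q := by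
  calc ∑ j, ‖u (x j)‖ ^ q
      ≤ A * ((∑ ε : Fin m → Bool, ‖signedSum ε fun j => u (x j)‖ ^ q) / 2 ^ m) := hF m _
    _ ≤ A * ((∑ _ε : Fin m → Bool, (‖u‖ * R) ^ q) / 2 ^ m) := by
        gcongr with ε
        rw [← map_signedSum]
        exact u.le_of_opNorm_le_of_le le_rfl (hx ε)
    _ = A * (‖u‖ * R) ^ q := by simp

lemma norm_toLp_ofReal {β : Type*} [Fintype β] (hq : 0 < q) (f : β → F) :
    ‖WithLp.toLp (ENNReal.ofReal q) f‖ = (∑ b, ‖f b‖ ^ q) ^ (1 / q) := by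
  rw [PiLp.norm_eq_sum (by rwa [ENNReal.toReal_ofReal hq.le]), ENNReal.toReal_ofReal hq.le]

lemma norm_toLp_ofReal_rpow {β : Type*} [Fintype β] (hq : 0 < q) (f : β → F) :
    ‖WithLp.toLp (ENNReal.ofReal q) f‖ ^ q = ∑ b, ‖f b‖ ^ q := by
  rw [norm_toLp_ofReal hq, one_div, Real.rpow_inv_rpow (by positivity) hq.ne']

lemma lpNorm_sum_le {β κ : Type*} [Fintype β] (hq : 1 ≤ q) (s : Finset κ) (f : κ → β → F) :
    (∑ b, ‖∑ k ∈ s, f k b‖ ^ q) ^ (1 / q) ≤ ∑ k ∈ s, (∑ b, ‖f k b‖ ^ q) ^ (1 / q) := by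
  have : Fact (1 ≤ ENNReal.ofReal q) := ⟨by simpa using hq⟩
  have htriangle := norm_sum_le s fun k => WithLp.toLp (ENNReal.ofReal q) (f k)
  rw [← WithLp.toLp_sum] at htriangle
  simpa only [norm_toLp_ofReal (zero_lt_one.trans_le hq), Finset.sum_apply] using htriangle

lemma HasAverageCotype.piLp {β : Type*} [Fintype β] [Fact (1 ≤ ENNReal.ofReal q)] (hq : 0 < q)
    (hF : HasAverageCotype q A F) :
    HasAverageCotype q A (PiLp (ENNReal.ofReal q) fun _ : β => F) := by
  intro m x
  have hnorm (y : PiLp (ENNReal.ofReal q) fun _ : β => F) : ‖y‖ ^ q = ∑ b, ‖y b‖ ^ q :=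
    norm_toLp_ofReal_rpow hq y.ofLp
  have hcoord (ε : Fin m → Bool) (b : β) : signedSum ε x b = signedSum ε fun j => x j b :=
    map_signedSum (PiLp.projₗ (𝕜 := ℤ) _ _ b) ε x
  simp only [hnorm, hcoord]
  rw [Finset.sum_comm, Finset.sum_comm (s := (Finset.univ : Finset (Fin m → Bool))), Finset.sum_div,
    Finset.mul_sum]
  exact Finset.sum_le_sum fun b _ => hF m fun j => x j b

end AverageCotype

section Domination

lemma mul_rpow_sub_one_mul_le {a b q : ℝ} (ha : 0 ≤ a) (hb : 0 ≤ b) (hq : 1 < q) :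
    q * (b ^ (q - 1) * a) ≤ (q - 1) * b ^ q + a ^ q := by
  have : 0 < q := by linarith
  have hq1 : q - 1 ≠ 0 := by linarith
  have hyoung := Real.young_inequality_of_nonneg ha (Real.rpow_nonneg hb (q - 1))
    (Real.HolderConjugate.conjExponent hq)
  rw [← Real.rpow_mul hb, Real.conjExponent, mul_div_cancel₀ _ hq1] at hyoung
  calc q * (b ^ (q - 1) * a) = q * (a * b ^ (q - 1)) := by ring
    _ ≤ q * (a ^ q / q + b ^ q / (q / (q - 1))) := by gcongr
    _ = (q - 1) * b ^ q + a ^ q := by field_simp; ring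

variable {𝕜 : Type*} [RCLike 𝕜] {F : Type*} [NormedAddCommGroup F] [NormedSpace 𝕜 F] {q D : ℝ}

lemma exists_subgradient_norm_rpow (hq : 1 < q) (w : F) :
    ∃ f : F →L[𝕜] 𝕜, RCLike.re (f w) = ‖w‖ ^ q ∧
      ∀ x, q * RCLike.re (f x) ≤ (q - 1) * ‖w‖ ^ q + ‖x‖ ^ q := by
  obtain ⟨φ, hφ, hφw⟩ := exists_dual_vector'' 𝕜 w
  refine ⟨((‖w‖ ^ (q - 1) : ℝ) : 𝕜) • φ, ?_, fun x => ?_⟩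
  · rw [_root_.smul_apply, smul_eq_mul, hφw, RCLike.re_ofReal_mul, RCLike.ofReal_re,
      ← Real.rpow_add_one' (norm_nonneg _) (by linarith), sub_add_cancel]
  · rw [_root_.smul_apply, smul_eq_mul, RCLike.re_ofReal_mul]
    have hφx : RCLike.re (φ x) ≤ ‖x‖ :=
      (RCLike.re_le_norm _).trans ((φ.le_of_opNorm_le hφ x).trans_eq (one_mul _))
    calc q * (‖w‖ ^ (q - 1) * RCLike.re (φ x)) ≤ q * (‖w‖ ^ (q - 1) * ‖x‖) := by gcongr
      _ ≤ (q - 1) * ‖w‖ ^ q + ‖x‖ ^ q :=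
        mul_rpow_sub_one_mul_le (norm_nonneg _) (norm_nonneg _) hq

variable {κ : Type*} {u : (κ → 𝕜) →ₗ[𝕜] F}

lemma exists_linear_subgradient (hq : 1 < q) (u : (κ → 𝕜) →ₗ[𝕜] F) {m : ℕ} (z : Fin m → κ → 𝕜) :
    ∃ L : (κ → ℝ) →ₗ[ℝ] ℝ, L 1 = ∑ j, ‖u (z j)‖ ^ q ∧
      ∀ h, q * L h ≤ (q - 1) * L 1 + ∑ j, ‖u fun t => (h t : 𝕜) * z j t‖ ^ q := by
  choose f hf hsub using fun j => exists_subgradient_norm_rpow (𝕜 := 𝕜) hq (u (z j))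
  let L : (κ → ℝ) →ₗ[ℝ] ℝ :=
    { toFun := fun h => ∑ j, RCLike.re (f j (u fun t => (h t : 𝕜) * z j t))
      map_add' := fun g h => by
        rw [← Finset.sum_add_distrib]
        refine Finset.sum_congr rfl fun j _ => ?_
        rw [← map_add, ← map_add, ← map_add]
        congr 3
        ext t
        simp [add_mul]
      map_smul' := fun c h => by
        rw [RingHom.id_apply, smul_eq_mul, Finset.mul_sum]
        refine Finset.sum_congr rfl fun j _ => ?_
        rw [← RCLike.re_ofReal_mul, ← smul_eq_mul, ← map_smul, ← map_smul]
        congr 3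
        ext t
        simp [mul_assoc] }
  have hL1 : L 1 = ∑ j, ‖u (z j)‖ ^ q := by
    simp only [L, LinearMap.coe_mk, AddHom.coe_mk, Pi.one_apply, RCLike.ofReal_one, one_mul, hf]
  refine ⟨L, hL1, fun h => ?_⟩
  rw [hL1]
  simp only [L, LinearMap.coe_mk, AddHom.coe_mk, Finset.mul_sum, ← Finset.sum_add_distrib]
  exact Finset.sum_le_sum fun j _ => hsub j _

/-- The linear map `u` on functions on `κ` is `(q, 1)`-summing for the supremum norm, `D` bounding
the `q`-th powers: the condition `∑ j, ‖z j t‖ ≤ 1` at all points `t` says that the weak `ℓ_1` norm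
of `z` is at most `1`. -/
def SupSummingBound (u : (κ → 𝕜) →ₗ[𝕜] F) (q D : ℝ) : Prop :=
  ∀ (m : ℕ) (z : Fin m → κ → 𝕜), (∀ t, ∑ j, ‖z j t‖ ≤ 1) → ∑ j, ‖u (z j)‖ ^ q ≤ D

lemma SupSummingBound.nonneg (hu : SupSummingBound u q D) : 0 ≤ D := by
  simpa using hu 0 Fin.elim0 (by simp)

lemma SupSummingBound.exists_near_extremal (hu : SupSummingBound u q D) {δ : ℝ} (hδ : 0 < δ) :
    ∃ S ≤ D, SupSummingBound u q S ∧ ∃ (m : ℕ) (z : Fin m → κ → 𝕜),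
      (∀ t, ∑ j, ‖z j t‖ ≤ 1) ∧ S ≤ ∑ j, ‖u (z j)‖ ^ q + δ := by
  let sums : Set ℝ := {r | ∃ (m : ℕ) (z : Fin m → κ → 𝕜),
    (∀ t, ∑ j, ‖z j t‖ ≤ 1) ∧ ∑ j, ‖u (z j)‖ ^ q = r}
  have hD : D ∈ upperBounds sums := by
    rintro _ ⟨m, z, hz, rfl⟩
    exact hu m z hz
  have hne : sums.Nonempty := ⟨_, 0, Fin.elim0, by simp, rfl⟩
  obtain ⟨_, ⟨m, z, hz, rfl⟩, hlt⟩ := exists_lt_of_lt_csSup hne (sub_lt_self (sSup sums) hδ)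
  exact ⟨sSup sums, csSup_le hne hD, fun m z hz => le_csSup ⟨D, hD⟩ ⟨m, z, hz, rfl⟩, m, z, hz,
    by linarith⟩

/- Pisier's argument: replacing a nearly extremal family `z` by `y, (1 - |y|) z` keeps it
admissible, so the sum can grow by at most `δ`. -/
lemma SupSummingBound.exists_domination (hu : SupSummingBound u q D) (hq : 1 < q) {δ : ℝ}
    (hδ : 0 < δ) :
    ∃ L : (κ → ℝ) →ₗ[ℝ] ℝ, (∀ h, (∀ t, 0 ≤ h t) → (∀ t, h t ≤ 1) → L h ≤ D) ∧
      ∀ y : κ → 𝕜, (∀ t, ‖y t‖ ≤ 1) → ‖u y‖ ^ q ≤ q * L (fun t => ‖y t‖) + δ := by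
  obtain ⟨S, hSD, hS, m, z, hz, hzS⟩ := hu.exists_near_extremal hδ
  obtain ⟨L, hL1, hL⟩ := exists_linear_subgradient hq u z
  have hnorm (h : κ → ℝ) (h0 : ∀ t, 0 ≤ h t) (t : κ) :
      ∑ j, ‖(h t : 𝕜) * z j t‖ ≤ h t := by
    simp only [norm_mul, RCLike.norm_of_nonneg (h0 t), ← Finset.mul_sum]
    exact mul_le_of_le_one_right (h0 t) (hz t)
  refine ⟨L, fun h h0 h1 => ?_, fun y hy => ?_⟩
  · have hhz := hS m (fun j t => (h t : 𝕜) * z j t) fun t => (hnorm h h0 t).trans (h1 t)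
    have hL1S : L 1 ≤ S := hL1.trans_le (hS m z hz)
    have hqL : q * L h ≤ q * S := by nlinarith [hL h]
    exact (le_of_mul_le_mul_left hqL (by linarith)).trans hSD
  · let h : κ → ℝ := 1 - fun t => ‖y t‖
    have h0 (t : κ) : 0 ≤ h t := sub_nonneg.2 (hy t)
    have hcons := hS (m + 1) (Fin.cons y fun j t => (h t : 𝕜) * z j t) fun t => by
      simp only [Fin.sum_univ_succ, Fin.cons_zero, Fin.cons_succ]
      exact add_le_of_le_sub_left (hnorm h h0 t)
    simp only [Fin.sum_univ_succ, Fin.cons_zero, Fin.cons_succ] at hcons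
    have hLh : L h = L 1 - L fun t => ‖y t‖ := map_sub L _ _
    have hsub := hLh ▸ hL h
    linarith

lemma SupSummingBound.sum_norm_rpow_le (hu : SupSummingBound u q D) (hq : 1 < q) {β : Type*}
    [Fintype β] {y : β → κ → 𝕜} (hy : ∀ b t, ‖y b t‖ ≤ 1) {R : ℝ} (hR : 0 < R)
    (hyR : ∀ t, ∑ b, ‖y b t‖ ≤ R) : ∑ b, ‖u (y b)‖ ^ q ≤ q * R * D := by
  refine le_of_forall_pos_le_add fun η hη => ?_
  set δ := η / (Fintype.card β + 1)
  have hδ : Fintype.card β * δ ≤ η := by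
    rw [mul_div_assoc', div_le_iff₀ (by positivity)]
    nlinarith
  obtain ⟨L, hLD, hL⟩ := hu.exists_domination hq (δ := δ) (by positivity)
  have hLR : L (∑ b, fun t => ‖y b t‖) ≤ R * D := by
    have hle := hLD (R⁻¹ • ∑ b, fun t => ‖y b t‖)
      (fun t => by simp only [Pi.smul_apply, Finset.sum_apply, smul_eq_mul]; positivity)
      (fun t => by simpa [inv_mul_le_iff₀ hR] using hyR t)
    rwa [map_smul, smul_eq_mul, inv_mul_le_iff₀ hR] at hle
  calc ∑ b, ‖u (y b)‖ ^ q ≤ ∑ b, (q * L (fun t => ‖y b t‖) + δ) :=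
        Finset.sum_le_sum fun b _ => hL _ (hy b)
    _ = q * L (∑ b, fun t => ‖y b t‖) + Fintype.card β * δ := by
        simp only [Finset.sum_add_distrib, ← Finset.mul_sum, map_sum, Finset.sum_const,
          Finset.card_univ, nsmul_eq_mul]
    _ ≤ q * (R * D) + η := by gcongr
    _ = q * R * D + η := by ring

end Domination

section Layers

/-- The part of a scalar `X` whose modulus lies between `k` and `k + 1`: these parts all have the
argument of `X`, modulus at most `1`, and add up to `X`. -/
noncomputable def layer {𝕜 : Type*} [RCLike 𝕜] (k : ℕ) (X : 𝕜) : 𝕜 :=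
  ((min ‖X‖ (k + 1 : ℕ) - min ‖X‖ k : ℝ) : 𝕜) * (X / (‖X‖ : 𝕜))

variable {𝕜 : Type*} [RCLike 𝕜]

lemma sum_range_layer {N : ℕ} {X : 𝕜} (hX : ‖X‖ ≤ N) : ∑ k ∈ Finset.range N, layer k X = X := by
  simp only [layer]
  rw [← Finset.sum_mul, ← RCLike.ofReal_sum, Finset.sum_range_sub fun k : ℕ => min ‖X‖ k,
    min_eq_left hX, Nat.cast_zero, min_eq_right (norm_nonneg X), sub_zero]
  refine mul_div_cancel_of_imp' fun h => ?_
  simpa using h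

lemma norm_layer_le (k : ℕ) (X : 𝕜) : ‖layer k X‖ ≤ min ‖X‖ (k + 1 : ℕ) - min ‖X‖ k := by
  have hmin : min ‖X‖ (k : ℝ) ≤ min ‖X‖ (k + 1 : ℕ) := by gcongr; simp
  rw [layer, norm_mul, RCLike.norm_of_nonneg (sub_nonneg.2 hmin)]
  refine mul_le_of_le_one_right (sub_nonneg.2 hmin) ?_
  rw [norm_div, RCLike.norm_of_nonneg (norm_nonneg _)]
  exact div_self_le_one _

lemma norm_layer_le_one (k : ℕ) (X : 𝕜) : ‖layer k X‖ ≤ 1 := by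
  refine (norm_layer_le k X).trans ?_
  rw [Nat.cast_succ]
  grind

lemma norm_layer_le_exp (k : ℕ) (X : 𝕜) : ‖layer k X‖ ≤ Real.exp ‖X‖ * Real.exp (-k) := by
  rw [← Real.exp_add]
  rcases le_or_gt ‖X‖ k with h | h
  · refine (norm_layer_le k X).trans ?_
    rw [min_eq_left h, min_eq_left (h.trans (by simp)), sub_self]
    positivity
  · exact (norm_layer_le_one k X).trans (Real.one_le_exp (by linarith))

variable {F : Type*} [NormedAddCommGroup F] [NormedSpace 𝕜 F] {q D : ℝ} {κ : Type*}
  {u : (κ → 𝕜) →ₗ[𝕜] F}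

lemma SupSummingBound.lpNorm_layer_le (hu : SupSummingBound u q D) (hq : 1 < q) {β : Type*}
    [Fintype β] {X : β → κ → 𝕜} {R : ℝ} (hR : 0 < R) (hX : ∀ t, ∑ b, Real.exp ‖X b t‖ ≤ R)
    (k : ℕ) :
    (∑ b, ‖u fun t => layer k (X b t)‖ ^ q) ^ (1 / q) ≤
      (q * R * D) ^ (1 / q) * Real.exp (-1 / q) ^ k := by
  have hD := hu.nonneg
  have hlayerR (t : κ) : ∑ b, ‖layer k (X b t)‖ ≤ R * Real.exp (-k) :=
    calc ∑ b, ‖layer k (X b t)‖ ≤ ∑ b, Real.exp ‖X b t‖ * Real.exp (-k) :=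
          Finset.sum_le_sum fun b _ => norm_layer_le_exp _ _
      _ ≤ R * Real.exp (-k) := by rw [← Finset.sum_mul]; gcongr; exact hX t
  calc (∑ b, ‖u fun t => layer k (X b t)‖ ^ q) ^ (1 / q)
      ≤ (q * (R * Real.exp (-k)) * D) ^ (1 / q) := by
        gcongr
        exact hu.sum_norm_rpow_le hq (fun b t => norm_layer_le_one _ _) (by positivity) hlayerR
    _ = (q * R * D * Real.exp (-k)) ^ (1 / q) := by ring_nf
    _ = (q * R * D) ^ (1 / q) * Real.exp (-1 / q) ^ k := by
        rw [Real.mul_rpow (by positivity) (by positivity), ← Real.exp_mul, ← Real.exp_nat_mul]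
        ring_nf

lemma SupSummingBound.lpNorm_le_of_sum_exp_le (hu : SupSummingBound u q D) (hq : 1 < q)
    {β : Type*} [Fintype β] {X : β → κ → 𝕜} {R : ℝ} (hR : 0 < R)
    (hX : ∀ t, ∑ b, Real.exp ‖X b t‖ ≤ R) :
    (∑ b, ‖u (X b)‖ ^ q) ^ (1 / q) ≤ (q * R * D) ^ (1 / q) / (1 - Real.exp (-1 / q)) := by
  have hD := hu.nonneg
  obtain ⟨N, hN⟩ := exists_nat_ge R
  have hXN (b : β) (t : κ) : ‖X b t‖ ≤ N :=
    calc ‖X b t‖ ≤ Real.exp ‖X b t‖ := by linarith [Real.add_one_le_exp ‖X b t‖]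
      _ ≤ ∑ b, Real.exp ‖X b t‖ :=
        Finset.single_le_sum (f := fun b => Real.exp ‖X b t‖) (fun _ _ => by positivity)
          (Finset.mem_univ b)
      _ ≤ N := (hX t).trans hN
  have hsum (b : β) : u (X b) = ∑ k ∈ Finset.range N, u fun t => layer k (X b t) := by
    rw [← map_sum]
    congr 1
    ext t
    rw [Finset.sum_apply, sum_range_layer (hXN b t)]
  have hexp : Real.exp (-1 / q) < 1 :=
    Real.exp_lt_one_iff.2 (div_neg_of_neg_of_pos (by simp) (by linarith))
  calc (∑ b, ‖u (X b)‖ ^ q) ^ (1 / q)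
      ≤ ∑ k ∈ Finset.range N, (∑ b, ‖u fun t => layer k (X b t)‖ ^ q) ^ (1 / q) := by
        simp only [hsum]
        exact lpNorm_sum_le hq.le _ _
    _ ≤ ∑ k ∈ Finset.range N, (q * R * D) ^ (1 / q) * Real.exp (-1 / q) ^ k :=
        Finset.sum_le_sum fun k _ => hu.lpNorm_layer_le hq hR hX k
    _ ≤ (q * R * D) ^ (1 / q) / (1 - Real.exp (-1 / q)) := by
        rw [← Finset.mul_sum, div_eq_mul_one_div (_ ^ _), Finset.range_eq_Ico]
        gcongr
        simpa only [pow_zero] using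
          geom_sum_Ico_le_of_lt_one (m := 0) (n := N) (Real.exp_nonneg _) hexp

end Layers

section Operators

variable {𝕜 : Type*} [RCLike 𝕜] {q A : ℝ}

section SupNorm

variable {κ : Type*} [Fintype κ] {F : Type*} [NormedAddCommGroup F] [NormedSpace 𝕜 F]

lemma HasAverageCotype.supSummingBound (hF : HasAverageCotype q A F) (hA : 0 ≤ A) (hq : 0 ≤ q)
    (u : (κ → 𝕜) →L[𝕜] F) : SupSummingBound (u : (κ → 𝕜) →ₗ[𝕜] F) q (A * ‖u‖ ^ q) := by
  intro m z hz
  have hsigned (ε : Fin m → Bool) : ‖signedSum ε z‖ ≤ 1 :=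
    (pi_norm_le_iff_of_nonneg zero_le_one).2 fun t => by
      rw [signedSum_apply]
      exact (norm_signedSum_le ε _).trans (hz t)
  simpa using hF.sum_norm_map_rpow_le hA hq u hsigned

/-- The constant with which operators from a space of functions with the supremum norm into a
space with `HasAverageCotype q A` are `(q, 2)`-summing; it does not depend on the dimension. -/
noncomputable def supSummingConst (q A : ℝ) : ℝ :=
  (q * (2 * Real.exp 2) * A ^ 2) ^ (1 / q) / (1 - Real.exp (-1 / q))

lemma supSummingConst_nonneg (hq : 0 ≤ q) : 0 ≤ supSummingConst q A := by
  have hexp : Real.exp (-1 / q) ≤ 1 :=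
    Real.exp_le_one_iff.2 (div_nonpos_of_nonpos_of_nonneg (by simp) hq)
  exact div_nonneg (by positivity) (sub_nonneg.2 hexp)

lemma HasAverageCotype.lpNorm_map_le_of_sum_sq_le_one (hF : HasAverageCotype q A F) (hA : 0 ≤ A)
    (hq : 1 < q) (u : (κ → 𝕜) →L[𝕜] F) {m : ℕ} {a : Fin m → κ → 𝕜}
    (ha : ∀ t, ∑ j, ‖a j t‖ ^ 2 ≤ 1) :
    (∑ j, ‖u (a j)‖ ^ q) ^ (1 / q) ≤ supSummingConst q A * ‖u‖ := by
  have hq0 : 0 < q := by linarith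
  have hexp (t : κ) : ∑ ε : Fin m → Bool, Real.exp ‖signedSum ε a t‖ ≤
      2 ^ m * (2 * Real.exp 2) := by
    simp only [signedSum_apply]
    refine (sum_exp_norm_signedSum_le fun j => a j t).trans ?_
    rw [Fintype.card_fin]
    gcongr
    linarith [ha t]
  have hsums := (hF.supSummingBound hA hq0.le u).lpNorm_le_of_sum_exp_le hq (by positivity) hexp
  have hcotype : ∑ j, ‖u (a j)‖ ^ q ≤
      A / 2 ^ m * ∑ ε : Fin m → Bool, ‖u (signedSum ε a)‖ ^ q := by
    simpa only [map_signedSum, mul_div_assoc', div_mul_eq_mul_div] using hF m fun j => u (a j)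
  calc (∑ j, ‖u (a j)‖ ^ q) ^ (1 / q)
      ≤ (A / 2 ^ m) ^ (1 / q) * (∑ ε : Fin m → Bool, ‖u (signedSum ε a)‖ ^ q) ^ (1 / q) := by
        rw [← Real.mul_rpow (by positivity) (by positivity)]
        gcongr
    _ ≤ (A / 2 ^ m) ^ (1 / q) * ((q * (2 ^ m * (2 * Real.exp 2)) * (A * ‖u‖ ^ q)) ^ (1 / q) /
          (1 - Real.exp (-1 / q))) := by
        gcongr
        exact hsums
    _ = (q * (2 * Real.exp 2) * A ^ 2 * ‖u‖ ^ q) ^ (1 / q) / (1 - Real.exp (-1 / q)) := by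
        rw [mul_div_assoc', ← Real.mul_rpow (by positivity) (by positivity)]
        congr 2
        field_simp
    _ = supSummingConst q A * ‖u‖ := by
        rw [Real.mul_rpow (by positivity) (by positivity), one_div q,
          Real.rpow_rpow_inv (norm_nonneg _) hq0.ne', supSummingConst, one_div q]
        ring

lemma HasAverageCotype.lpNorm_map_le_of_sum_sq_le (hF : HasAverageCotype q A F) (hA : 0 ≤ A)
    (hq : 1 < q) (u : (κ → 𝕜) →L[𝕜] F) {m : ℕ} {a : Fin m → κ → 𝕜} {ρ : ℝ} (hρ : 0 ≤ ρ)
    (ha : ∀ t, ∑ j, ‖a j t‖ ^ 2 ≤ ρ ^ 2) :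
    (∑ j, ‖u (a j)‖ ^ q) ^ (1 / q) ≤ supSummingConst q A * ‖u‖ * ρ := by
  rcases hρ.eq_or_lt with rfl | hρ
  · have hzero (j : Fin m) : a j = 0 := by
      ext t
      have h := (Finset.single_le_sum (f := fun j => ‖a j t‖ ^ 2) (fun _ _ => by positivity)
        (Finset.mem_univ j)).trans (ha t)
      simpa using h
    have hq0 : q ≠ 0 := by linarith
    simp [hzero, hq0]
  · have hρ' : (ρ : 𝕜) ≠ 0 := RCLike.ofReal_ne_zero.2 hρ.ne'
    have hunit (t : κ) : ∑ j, ‖((ρ : 𝕜)⁻¹ • a) j t‖ ^ 2 ≤ 1 := by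
      simp only [Pi.smul_apply, norm_smul, norm_inv, RCLike.norm_of_nonneg hρ.le, mul_pow,
        ← Finset.mul_sum, inv_pow]
      rw [inv_mul_le_iff₀ (by positivity), mul_one]
      exact ha t
    have hscaled := hF.lpNorm_map_le_of_sum_sq_le_one hA hq ((ρ : 𝕜) • u) hunit
    rw [norm_smul, RCLike.norm_of_nonneg hρ.le] at hscaled
    simpa [inv_smul_smul₀ hρ', mul_assoc, mul_comm ‖u‖] using hscaled

end SupNorm

lemma rpow_one_div_le_of_le_mul_rpow {s c b : ℝ} (hq : 0 < q) (hs : 0 ≤ s) (hc : 0 ≤ c)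
    (hb : 0 ≤ b) (h : s ≤ c * b ^ q) : s ^ (1 / q) ≤ c ^ (1 / q) * b := by
  calc s ^ (1 / q) ≤ (c * b ^ q) ^ (1 / q) := by gcongr
    _ = c ^ (1 / q) * b := by
      rw [Real.mul_rpow hc (by positivity), one_div, Real.rpow_rpow_inv hb hq.ne']

variable {E : Type*} [NormedAddCommGroup E] [NormedSpace 𝕜 E]

universe w

variable (𝕜 E) in
/-- Every operator `u` from `E` into a space with `HasAverageCotype q A` is `(q, p)`-summing with
constant `K * ‖u‖`. The constant `K` is uniform over all target spaces, so that the target may be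
replaced by an `ℓ_q`-sum of copies of itself. -/
def CotypeOperatorsSumming (q A p K : ℝ) : Prop :=
  ∀ (F : Type w) [NormedAddCommGroup F] [NormedSpace 𝕜 F], HasAverageCotype q A F →
    ∀ (u : E →L[𝕜] F) (m : ℕ) (x : Fin m → E),
      (∑ j, ‖u (x j)‖ ^ q) ^ (1 / q) ≤ K * ‖u‖ * weakLpNorm 𝕜 p x

lemma cotypeOperatorsSumming_one (hA : 0 ≤ A) (hq : 0 < q) :
    CotypeOperatorsSumming.{w} 𝕜 E q A 1 (A ^ (1 / q)) := by
  intro F _ _ hF u m x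
  rw [mul_assoc]
  exact rpow_one_div_le_of_le_mul_rpow hq (by positivity) hA
    (mul_nonneg (norm_nonneg u) (weakLpNorm_nonneg x))
    (hF.sum_norm_map_rpow_le hA hq.le u fun ε => norm_signedSum_le_weakLpNorm_one ε x)

lemma sum_norm_sq_coord_le {κ : Type*} [Fintype κ] {N : Submodule 𝕜 E} (v : N →L[𝕜] (κ → 𝕜))
    {m : ℕ} (x : Fin m → N) (t : κ) :
    ∑ j, ‖v (x j) t‖ ^ 2 ≤ (‖v‖ * weakLpNorm 𝕜 2 fun j => (x j : E)) ^ 2 := by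
  have hcoord : ‖(ContinuousLinearMap.proj t).comp v‖ ≤ ‖v‖ :=
    ContinuousLinearMap.opNorm_le_bound _ (norm_nonneg v) fun z =>
      (norm_le_pi_norm (v z) t).trans (v.le_opNorm z)
  have hweak := (lpNorm_apply_le_weakLpNorm_coe two_pos x
    ((ContinuousLinearMap.proj t).comp v)).trans
      (mul_le_mul_of_nonneg_right hcoord (weakLpNorm_nonneg _))
  rw [← Real.sqrt_eq_rpow] at hweak
  simpa using Real.sqrt_le_left (mul_nonneg (norm_nonneg _) (weakLpNorm_nonneg _)) |>.1 hweak

lemma IsLinftySpace.exists_cotypeOperatorsSumming (hE : IsLinftySpace 𝕜 E) (hA : 0 ≤ A)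
    (hq : 1 < q) : ∃ K, 0 ≤ K ∧ CotypeOperatorsSumming.{w} 𝕜 E q A 2 K := by
  obtain ⟨lam, hlam, hE⟩ := hE
  have hc := supSummingConst_nonneg (q := q) (A := A) (by linarith)
  refine ⟨supSummingConst q A * lam, by positivity, fun F _ _ hF u m x => ?_⟩
  have hW := weakLpNorm_nonneg (𝕜 := 𝕜) (p := 2) x
  obtain ⟨N, hspan, -, v, hv⟩ := hE (Submodule.span 𝕜 (Set.range x))
    (FiniteDimensional.span_of_finite 𝕜 (Set.finite_range x))
  set V := (v : N →L[𝕜] (Fin (Module.finrank 𝕜 N) → 𝕜))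
  set V' := (v.symm : (Fin (Module.finrank 𝕜 N) → 𝕜) →L[𝕜] N)
  let xN (j : Fin m) : N := ⟨x j, hspan (Submodule.subset_span ⟨j, rfl⟩)⟩
  let uV' := (u.comp N.subtypeL).comp V'
  have huV' : ‖uV'‖ ≤ ‖u‖ * ‖V'‖ :=
    ContinuousLinearMap.opNorm_le_bound _ (by positivity) fun z => by
      rw [mul_assoc]
      exact u.le_of_opNorm_le_of_le le_rfl (V'.le_opNorm z)
  have huV'V (j : Fin m) : uV' (V (xN j)) = u (x j) := by simp [uV', V', V, xN]
  calc (∑ j, ‖u (x j)‖ ^ q) ^ (1 / q) = (∑ j, ‖uV' (V (xN j))‖ ^ q) ^ (1 / q) := by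
        simp only [huV'V]
    _ ≤ supSummingConst q A * ‖uV'‖ * (‖V‖ * weakLpNorm 𝕜 2 x) :=
        hF.lpNorm_map_le_of_sum_sq_le hA hq uV' (by positivity) (sum_norm_sq_coord_le V xN)
    _ ≤ supSummingConst q A * (‖u‖ * ‖V'‖) * (‖V‖ * weakLpNorm 𝕜 2 x) := by gcongr
    _ = supSummingConst q A * (‖V‖ * ‖V'‖) * ‖u‖ * weakLpNorm 𝕜 2 x := by ring
    _ ≤ supSummingConst q A * lam * ‖u‖ * weakLpNorm 𝕜 2 x := by gcongr

end Operators

section MultipleSumming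

/-- `T` is multiple `(p; q₁,…,qₙ)`-summing with constant `C`: as in `AbsSummingWith`, but the sum
runs over all multi-indices `r` instead of the diagonal ones. -/
def MultipleSummingWith (𝕜 : Type*) [RCLike 𝕜] {ι : Type*} [Fintype ι] [DecidableEq ι]
    {E : ι → Type*} [∀ i, NormedAddCommGroup (E i)] [∀ i, NormedSpace 𝕜 (E i)]
    {F : Type*} [NormedAddCommGroup F]
    (p : ℝ) (q : ι → ℝ) (C : ℝ) (T : (∀ i, E i) → F) : Prop :=
  ∀ (m : ι → ℕ) (x : ∀ i, Fin (m i) → E i),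
    (∑ r : ∀ i, Fin (m i), ‖T fun i => x i (r i)‖ ^ p) ^ (1 / p) ≤
      C * ∏ i, weakLpNorm 𝕜 (q i) (x i)

universe w

variable {𝕜 : Type*} [RCLike 𝕜] {q A : ℝ}

lemma MultipleSummingWith.absSummingWith {ι : Type*} [Fintype ι] [DecidableEq ι] [Nonempty ι]
    {E : ι → Type*} [∀ i, NormedAddCommGroup (E i)] [∀ i, NormedSpace 𝕜 (E i)] {F : Type*}
    [NormedAddCommGroup F] {p : ι → ℝ} {C : ℝ} {T : (∀ i, E i) → F} (hq : 0 ≤ q)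
    (hT : MultipleSummingWith 𝕜 q p C T) : AbsSummingWith 𝕜 q p C T := by
  intro m x
  refine le_trans ?_ (hT (fun _ => m) x)
  gcongr
  let diag : Fin m ↪ (ι → Fin m) := ⟨fun j _ => j, Function.const_injective⟩
  exact (Finset.sum_map Finset.univ diag fun r => ‖T fun i => x i (r i)‖ ^ q).symm.trans_le
    (Finset.sum_le_univ_sum_of_nonneg fun r => by positivity)

section Slices

variable {n : ℕ} {E : Fin (n + 1) → Type*} [∀ i, NormedAddCommGroup (E i)]
  [∀ i, NormedSpace 𝕜 (E i)] {F : Type w} [NormedAddCommGroup F] [NormedSpace 𝕜 F]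

variable (q) in
/-- The multilinear map `y ↦ (T (x_j, y))_j` with values in `ℓ_q(F)`, obtained by freezing a finite
family `x` in the first variable of `T`. -/
noncomputable def lpSlices (T : ContinuousMultilinearMap 𝕜 E F) {l : ℕ} (x : Fin l → E 0) :
    ContinuousMultilinearMap 𝕜 (fun i : Fin n => E i.succ)
      (PiLp (ENNReal.ofReal q) fun _ : Fin l => F) :=
  ((PiLp.continuousLinearEquiv (ENNReal.ofReal q) 𝕜 fun _ : Fin l => F).symm :
    (Fin l → F) →L[𝕜] _).compContinuousMultilinearMap
      (ContinuousMultilinearMap.pi fun j => T.curryLeft (x j))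

lemma lpSlices_apply (T : ContinuousMultilinearMap 𝕜 E F) {l : ℕ} (x : Fin l → E 0)
    (y : ∀ i : Fin n, E i.succ) :
    lpSlices q T x y = WithLp.toLp (ENNReal.ofReal q) fun j => T (Fin.cons (x j) y) :=
  rfl

lemma norm_lpSlices_le [Fact (1 ≤ ENNReal.ofReal q)] {p K : ℝ} (hq : 0 < q) (hK : 0 ≤ K)
    (hE : CotypeOperatorsSumming.{w} 𝕜 (E 0) q A p K) (hF : HasAverageCotype q A F)
    (T : ContinuousMultilinearMap 𝕜 E F) {l : ℕ} (x : Fin l → E 0) :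
    ‖lpSlices q T x‖ ≤ K * ‖T‖ * weakLpNorm 𝕜 p x := by
  have hx := weakLpNorm_nonneg (𝕜 := 𝕜) (p := p) x
  refine ContinuousMultilinearMap.opNorm_le_bound (by positivity) fun y => ?_
  let u : E 0 →L[𝕜] F := (ContinuousMultilinearMap.apply 𝕜 _ F y).comp T.curryLeft
  have hu : ‖u‖ ≤ ‖T‖ * ∏ i, ‖y i‖ :=
    ContinuousLinearMap.opNorm_le_bound _ (by positivity) fun e => by
      rw [mul_right_comm]
      exact T.norm_map_cons_le e y
  calc ‖lpSlices q T x y‖ = (∑ j, ‖u (x j)‖ ^ q) ^ (1 / q) := by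
        rw [lpSlices_apply, norm_toLp_ofReal hq]
        rfl
    _ ≤ K * ‖u‖ * weakLpNorm 𝕜 p x := hE F hF u l x
    _ ≤ K * (‖T‖ * ∏ i, ‖y i‖) * weakLpNorm 𝕜 p x := by gcongr
    _ = K * ‖T‖ * weakLpNorm 𝕜 p x * ∏ i, ‖y i‖ := by ring

lemma sum_norm_lpSlices_rpow (hq : 0 < q) (T : ContinuousMultilinearMap 𝕜 E F)
    {m : Fin (n + 1) → ℕ} (x : ∀ i, Fin (m i) → E i) :
    ∑ r : ∀ i : Fin n, Fin (m i.succ), ‖lpSlices q T (x 0) fun i => x i.succ (r i)‖ ^ q =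
      ∑ r : ∀ i, Fin (m i), ‖T fun i => x i (r i)‖ ^ q := by
  have hcons (j : Fin (m 0)) (r : ∀ i : Fin n, Fin (m i.succ)) :
      (Fin.cons (x 0 j) fun i => x i.succ (r i) : ∀ i, E i) =
        fun i => x i (Fin.consEquiv (fun i => Fin (m i)) (j, r) i) :=
    funext <| Fin.cases rfl fun _ => rfl
  simp only [lpSlices_apply, norm_toLp_ofReal_rpow hq, hcons]
  rw [Finset.sum_comm, ← Fintype.sum_prod_type']
  exact (Fin.consEquiv fun i => Fin (m i)).sum_comp fun r => ‖T fun i => x i (r i)‖ ^ q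

end Slices

theorem multipleSummingWith_fin (hq : 1 ≤ q) {n : ℕ} {E : Fin n → Type*}
    [∀ i, NormedAddCommGroup (E i)] [∀ i, NormedSpace 𝕜 (E i)] {p K : Fin n → ℝ}
    (hK : ∀ i, 0 ≤ K i) (hE : ∀ i, CotypeOperatorsSumming.{w} 𝕜 (E i) q A (p i) (K i))
    {F : Type w} [NormedAddCommGroup F] [NormedSpace 𝕜 F] (hF : HasAverageCotype q A F)
    (T : ContinuousMultilinearMap 𝕜 E F) :
    MultipleSummingWith 𝕜 q p ((∏ i, K i) * ‖T‖) T := by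
  have hq0 : 0 < q := by linarith
  have : Fact (1 ≤ ENNReal.ofReal q) := ⟨by simpa using hq⟩
  induction n generalizing F with
  | zero =>
    intro m x
    simpa [Real.rpow_rpow_inv (norm_nonneg _) hq0.ne'] using
      T.le_opNorm fun i => x i ((default : ∀ i, Fin (m i)) i)
  | succ n ih =>
    intro m x
    have hW (i : Fin (n + 1)) := weakLpNorm_nonneg (𝕜 := 𝕜) (p := p i) (x i)
    have hprod : 0 ≤ ∏ i : Fin n, K i.succ := Finset.prod_nonneg fun i _ => hK i.succ
    have hprodW : 0 ≤ ∏ i : Fin n, weakLpNorm 𝕜 (p i.succ) (x i.succ) :=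
      Finset.prod_nonneg fun i _ => hW i.succ
    calc (∑ r : ∀ i, Fin (m i), ‖T fun i => x i (r i)‖ ^ q) ^ (1 / q)
        = (∑ r : ∀ i : Fin n, Fin (m i.succ),
            ‖lpSlices q T (x 0) fun i => x i.succ (r i)‖ ^ q) ^ (1 / q) := by
          rw [sum_norm_lpSlices_rpow hq0]
      _ ≤ (∏ i : Fin n, K i.succ) * ‖lpSlices q T (x 0)‖ *
            ∏ i : Fin n, weakLpNorm 𝕜 (p i.succ) (x i.succ) :=
          ih (fun i => hK i.succ) (fun i => hE i.succ) (hF.piLp hq0) (lpSlices q T (x 0))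
            (fun i => m i.succ) fun i => x i.succ
      _ ≤ (∏ i : Fin n, K i.succ) * (K 0 * ‖T‖ * weakLpNorm 𝕜 (p 0) (x 0)) *
            ∏ i : Fin n, weakLpNorm 𝕜 (p i.succ) (x i.succ) := by
          gcongr
          exact norm_lpSlices_le hq0 (hK 0) (hE 0) hF T (x 0)
      _ = (∏ i, K i) * ‖T‖ * ∏ i, weakLpNorm 𝕜 (p i) (x i) := by
          rw [Fin.prod_univ_succ, Fin.prod_univ_succ]
          ring

lemma MultipleSummingWith.of_piCongrLeft {ι ι' : Type*} [Fintype ι] [DecidableEq ι] [Fintype ι']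
    [DecidableEq ι'] {E : ι → Type*} [∀ i, NormedAddCommGroup (E i)] [∀ i, NormedSpace 𝕜 (E i)]
    {F : Type*} [NormedAddCommGroup F] {p : ι → ℝ} {C : ℝ} {T : (∀ i, E i) → F} (e : ι' ≃ ι)
    (hT : MultipleSummingWith 𝕜 q (fun i => p (e i)) C fun y => T (Equiv.piCongrLeft E e y)) :
    MultipleSummingWith 𝕜 q p C T := by
  intro m x
  have hfamily (r : ∀ i, Fin (m (e i))) : (Equiv.piCongrLeft E e fun i => x (e i) (r i)) =
      fun i => x i (Equiv.piCongrLeft (fun i => Fin (m i)) e r i) := by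
    ext i
    obtain ⟨i, rfl⟩ := e.surjective i
    simp only [Equiv.piCongrLeft_apply_apply]
  have h := hT (fun i => m (e i)) fun i => x (e i)
  simp only [hfamily] at h
  rwa [(Equiv.piCongrLeft (fun i => Fin (m i)) e).sum_comp fun r => ‖T fun i => x i (r i)‖ ^ q,
    e.prod_comp fun i => weakLpNorm 𝕜 (p i) (x i)] at h

theorem exists_multipleSummingWith (hq : 1 ≤ q) {ι : Type*} [Fintype ι] [DecidableEq ι]
    {E : ι → Type*} [∀ i, NormedAddCommGroup (E i)] [∀ i, NormedSpace 𝕜 (E i)] {p K : ι → ℝ}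
    (hK : ∀ i, 0 ≤ K i) (hE : ∀ i, CotypeOperatorsSumming.{w} 𝕜 (E i) q A (p i) (K i))
    {F : Type w} [NormedAddCommGroup F] [NormedSpace 𝕜 F] (hF : HasAverageCotype q A F)
    (T : ContinuousMultilinearMap 𝕜 E F) : ∃ C, 0 ≤ C ∧ MultipleSummingWith 𝕜 q p C T := by
  let e := (Fintype.equivFin ι).symm
  let T' : ContinuousMultilinearMap 𝕜 (fun i => E (e i)) F :=
    { MultilinearMap.domDomCongrLinearEquiv' 𝕜 𝕜 E F e.symm T.toMultilinearMap with
      cont := T.cont.comp (Homeomorph.piCongrLeft e).continuous }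
  exact ⟨(∏ i, K (e i)) * ‖T'‖, mul_nonneg (Finset.prod_nonneg fun i _ => hK (e i)) (norm_nonneg _),
    .of_piCongrLeft e (multipleSummingWith_fin hq (fun i => hK (e i)) (fun i => hE (e i)) hF T')⟩

end MultipleSumming

theorem absSumming_cotype_Linfty_general {𝕜 : Type*} [RCLike 𝕜] {ι : Type*} [Fintype ι]
    [DecidableEq ι] {E : ι → Type*} [∀ i, NormedAddCommGroup (E i)] [∀ i, NormedSpace 𝕜 (E i)]
    {F : Type*} [NormedAddCommGroup F] [NormedSpace 𝕜 F] {q : ℝ} (hq : 2 ≤ q)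
    (hF : HasCotype q F) {p : ι → ℝ} (hE : ∀ i, p i = 1 ∨ p i = 2 ∧ IsLinftySpace 𝕜 (E i))
    (T : ContinuousMultilinearMap 𝕜 E F) : ∃ C, 0 ≤ C ∧ MultipleSummingWith 𝕜 q p C T := by
  obtain ⟨A, hA, hF⟩ := hF.exists_hasAverageCotype hq
  have hlinear (i : ι) : ∃ K, 0 ≤ K ∧ CotypeOperatorsSumming 𝕜 (E i) q A (p i) K := by
    rcases hE i with hp | ⟨hp, hEi⟩ <;> rw [hp]
    · exact ⟨A ^ (1 / q), by positivity, cotypeOperatorsSumming_one hA (by linarith)⟩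
    · exact hEi.exists_cotypeOperatorsSumming hA (by linarith)
  choose K hK hlinear using hlinear
  exact exists_multipleSummingWith (by linarith) hK hlinear hF T

/-- If `F` has cotype `q` (`2 ≤ q`) and `E₁,…,E_s` are `𝓛_∞`-spaces, then
for any further Banach spaces `G₁,…,G_k`, every continuous multilinear map from
`E₁ × ⋯ × E_s × G₁ × ⋯ × G_k` into `F` is absolutely `(q; 2,…,2,1,…,1)`-summing. -/
theorem absSumming_cotype_Linfty {𝕜 : Type v} [RCLike 𝕜] {s k : ℕ} (hs : 1 ≤ s)
    {E : Fin s → Type u} [∀ i, NormedAddCommGroup (E i)] [∀ i, NormedSpace 𝕜 (E i)]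
    [∀ i, CompleteSpace (E i)]
    {F : Type*} [NormedAddCommGroup F] [NormedSpace 𝕜 F] [CompleteSpace F]
    {q : ℝ} (hq2 : 2 ≤ q) (hF : HasCotype q F)
    (hE : ∀ i, IsLinftySpace 𝕜 (E i)) :
    ∀ (G : Fin k → Type u) [∀ j, NormedAddCommGroup (G j)] [∀ j, NormedSpace 𝕜 (G j)]
      [∀ j, CompleteSpace (G j)],
      letI : ∀ i : Fin s ⊕ Fin k, NormedAddCommGroup (Sum.elim E G i) := fun i =>
        Sum.rec (motive := fun i => NormedAddCommGroup (Sum.elim E G i))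
          (fun a => inferInstanceAs (NormedAddCommGroup (E a)))
          (fun b => inferInstanceAs (NormedAddCommGroup (G b))) i
      letI : ∀ i : Fin s ⊕ Fin k, NormedSpace 𝕜 (Sum.elim E G i) := fun i =>
        Sum.rec (motive := fun i => NormedSpace 𝕜 (Sum.elim E G i))
          (fun a => inferInstanceAs (NormedSpace 𝕜 (E a)))
          (fun b => inferInstanceAs (NormedSpace 𝕜 (G b))) i
      ∀ T : ContinuousMultilinearMap 𝕜 (Sum.elim E G) F,
        ∃ C, 0 ≤ C ∧
          AbsSummingWith 𝕜 q (Sum.elim (fun _ => 2) (fun _ => 1)) C ⇑T := by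
  intro G _ _ _
  let _ : ∀ i, NormedAddCommGroup (Sum.elim E G i) :=
    Sum.rec (fun i => inferInstanceAs (NormedAddCommGroup (E i)))
      fun j => inferInstanceAs (NormedAddCommGroup (G j))
  let _ : ∀ i, NormedSpace 𝕜 (Sum.elim E G i) :=
    Sum.rec (fun i => inferInstanceAs (NormedSpace 𝕜 (E i)))
      fun j => inferInstanceAs (NormedSpace 𝕜 (G j))
  have : Nonempty (Fin s ⊕ Fin k) := ⟨Sum.inl ⟨0, hs⟩⟩
  intro T
  obtain ⟨C, hC, hT⟩ := absSumming_cotype_Linfty_general (E := Sum.elim E G) hq2 hF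
    (p := Sum.elim (fun _ => 2) fun _ => 1)
    (Sum.rec (fun i => .inr ⟨rfl, hE i⟩) fun _ => .inl rfl) T
  have habs := hT.absSummingWith (by linarith)
  exact ⟨C, hC, habs⟩
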